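/- arXiv:2108.00088 — 3 statements merged into one kernel-verified Lean document; each statement's English description precedes it below -/
import Mathlib

section
/- Let x ∈ 𝕊², let p ∈ ℝ³ satisfy ⟨p, x⟩ = 0, and set y = T(x,p). Then the function f(z) = −2 log‖z − y‖ is differentiable at z = x with (Euclidean) gradient ∇f(x) = −(x + p); in particular, for every tangent vector v ∈ ℝ³ with ⟨v, x⟩ = 0, the directional derivative of f at x in direction v equals −⟨p, v⟩. That is, the tangential gradient of the cost c(·, T(x,p)) at x equals −p, which is the optimality condition ∇ₓc(x, T(x,p)) = −p characterizing T as the optimal transport map for the cost c. -/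
/-!
Writing `s = ‖p‖ ^ 2 + 1`, orthogonality of `p` and `x` gives `‖x + p‖ ^ 2 = s`, and the definition
of `y` gives `x - y = (2 / s) • (x + p)`, whence `‖x - y‖ ^ 2 = 4 / s`. Since
`-2 log ‖z - y‖ = -log (‖z - y‖ ^ 2)`, its gradient at `x` is `-2 (x - y) / ‖x - y‖ ^ 2 = -(x + p)`.
-/


open scoped RealInnerProductSpace

/-- With `y = T(x,p)`, the function `z ↦ −2 log‖z − y‖` is differentiable at
`x` with Euclidean gradient `−(x + p)`; in particular its directional derivative at `x`
along any tangent vector `v` (`⟨v,x⟩ = 0`) equals `−⟨p, v⟩`, i.e. the tangential gradient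
of the cost `c(·, T(x,p))` at `x` is `−p` (the optimality condition `∇ₓc(x,T(x,p)) = −p`). -/
theorem cost_gradient_optimality
    (x p : EuclideanSpace ℝ (Fin 3)) (hx : ‖x‖ = 1) (hp : ⟪p, x⟫ = 0)
    (y : EuclideanSpace ℝ (Fin 3))
    (hy : y = (‖p‖ ^ 2 + 1)⁻¹ • ((-2 : ℝ) • p + (‖p‖ ^ 2 - 1) • x)) :
    HasGradientAt (fun z : EuclideanSpace ℝ (Fin 3) => -2 * Real.log ‖z - y‖)
        (-(x + p)) x ∧
    ∀ v : EuclideanSpace ℝ (Fin 3), ⟪v, x⟫ = 0 →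
      fderiv ℝ (fun z : EuclideanSpace ℝ (Fin 3) => -2 * Real.log ‖z - y‖) x v
        = -⟪p, v⟫ := by
  have hs : (0 : ℝ) < ‖p‖ ^ 2 + 1 := by positivity
  have hdiff : x - y = (2 * (‖p‖ ^ 2 + 1)⁻¹) • (x + p) := by
    rw [hy]
    match_scalars <;> field_simp <;> ring
  have hnorm : ‖x + p‖ ^ 2 = ‖p‖ ^ 2 + 1 := by
    rw [norm_add_sq_real, real_inner_comm, hp, hx]
    ring
  have hsq : ‖x - y‖ ^ 2 = 4 * (‖p‖ ^ 2 + 1)⁻¹ := by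
    rw [hdiff, norm_smul, mul_pow, hnorm, Real.norm_eq_abs, sq_abs]
    field_simp
    norm_num
  have hne : ‖x - y‖ ^ 2 ≠ 0 := by
    rw [hsq]
    positivity
  have hgrad : HasGradientAt (fun z : EuclideanSpace ℝ (Fin 3) => -2 * Real.log ‖z - y‖)
      (-(x + p)) x := by
    rw [hasGradientAt_iff_hasFDerivAt]
    have hlog := ((((hasFDerivAt_id x).sub_const y).norm_sq).log hne).neg
    refine (hlog.congr_fderiv ?_).congr_of_eventuallyEq (.of_forall fun z => ?_)
    · ext1 v
      simp only [id, hsq]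
      rw [hdiff]
      simp [inner_smul_left]
      field_simp
      ring
    · simp [Real.log_pow]
  refine ⟨hgrad, fun v hv => ?_⟩
  rw [hgrad.hasFDerivAt.fderiv, InnerProductSpace.toDual_apply_apply, inner_neg_left,
    inner_add_left, real_inner_comm, hv, zero_add]
end

section
/- Let x ∈ 𝕊², let p ∈ ℝ³ satisfy ⟨p, x⟩ = 0, and let ν ∈ ℝ³ be a unit vector with ⟨ν, x⟩ = 0. Then the function φ(t) = −2 log‖x + tν − T(x,p)‖ is twice differentiable at t = 0 and φ''(0) = ⟨ν, p⟩² − (‖p‖² + 1)/2. (This is the explicit formula for the second directional derivative −2 ∂²/∂ν² log‖x − y‖ evaluated at y = T(x,p), which appears in the term A(x,p) = D²ₓₓc(x, T(x,p)) of the Monge–Ampère equation.) -/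
open scoped RealInnerProductSpace

/-!
Since `x - T(x,p) = 2(p + x)/(‖p‖² + 1)` with `p ⊥ x`, the squared distance
`‖x + tν - T(x,p)‖²` is the quadratic `g(t) = t² + b t + a` with
`a = 4/(‖p‖² + 1) > 0` and `b = 4⟨ν,p⟩/(‖p‖² + 1)` (`norm_sq_add_smul_sub`). Hence `φ = -log g`
and `φ''(0) = (b/a)² - 2/a` (`neg_log_quadratic_second_deriv`), which is the claimed value.
-/

lemma norm_sq_add_smul_sub
    (x p ν : EuclideanSpace ℝ (Fin 3)) (hx : ‖x‖ = 1) (hp : ⟪p, x⟫ = 0)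
    (hν : ‖ν‖ = 1) (hνx : ⟪ν, x⟫ = 0) (t : ℝ) :
    ‖x + t • ν - (‖p‖ ^ 2 + 1)⁻¹ • ((-2 : ℝ) • p + (‖p‖ ^ 2 - 1) • x)‖ ^ 2 =
      t ^ 2 + 4 * ⟪ν, p⟫ / (‖p‖ ^ 2 + 1) * t + 4 / (‖p‖ ^ 2 + 1) := by
  have hP : ‖p‖ ^ 2 + 1 ≠ 0 := by positivity
  have hdiff : x + t • ν - (‖p‖ ^ 2 + 1)⁻¹ • ((-2 : ℝ) • p + (‖p‖ ^ 2 - 1) • x) =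
      t • ν + (2 / (‖p‖ ^ 2 + 1)) • (p + x) := by
    match_scalars <;> field_simp
    ring
  have hpx : ‖p + x‖ ^ 2 = ‖p‖ ^ 2 + 1 := by
    rw [norm_add_sq_real, hp, hx]; ring
  rw [hdiff, norm_add_sq_real, norm_smul, norm_smul, mul_pow, mul_pow, hpx, hν,
    inner_smul_left, inner_smul_right, inner_add_right, hνx, Real.norm_eq_abs, Real.norm_eq_abs,
    sq_abs, sq_abs]
  simp only [conj_trivial]
  field_simp
  ring

lemma neg_log_quadratic_second_deriv (a b : ℝ) (ha : 0 < a) :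
    DifferentiableAt ℝ (fun t : ℝ => -Real.log (t ^ 2 + b * t + a)) 0 ∧
      HasDerivAt (deriv fun t : ℝ => -Real.log (t ^ 2 + b * t + a))
        ((b / a) ^ 2 - 2 / a) 0 := by
  have hg (t : ℝ) : HasDerivAt (fun t : ℝ => t ^ 2 + b * t + a) (2 * t + b) t := by
    have h := (((hasDerivAt_id t).pow 2).add ((hasDerivAt_id t).const_mul b)).add_const a
    simpa using h
  have hf (t : ℝ) (ht : t ^ 2 + b * t + a ≠ 0) :
      HasDerivAt (fun t : ℝ => -Real.log (t ^ 2 + b * t + a))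
        (-((2 * t + b) / (t ^ 2 + b * t + a))) t := ((hg t).log ht).neg
  have h0 : (0 : ℝ) ^ 2 + b * 0 + a ≠ 0 := by simpa using ha.ne'
  refine ⟨(hf 0 h0).differentiableAt, ?_⟩
  -- The formula for the first derivative holds only near `0`, where the quadratic is nonzero.
  have hev : (deriv fun t : ℝ => -Real.log (t ^ 2 + b * t + a)) =ᶠ[nhds 0]
      fun t => -((2 * t + b) / (t ^ 2 + b * t + a)) := by
    filter_upwards [(hg 0).continuousAt.eventually_ne h0] with t ht
    exact (hf t ht).deriv
  have hnum : HasDerivAt (fun t : ℝ => 2 * t + b) 2 0 := by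
    simpa using ((hasDerivAt_id (0 : ℝ)).const_mul 2).add_const b
  refine HasDerivAt.congr_of_eventuallyEq ?_ hev
  refine (hnum.div (hg 0) h0).neg.congr_deriv ?_
  have := ha.ne'
  simp only [mul_zero, zero_add, ne_eq, OfNat.ofNat_ne_zero, not_false_eq_true, zero_pow]
  field_simp
  ring

/-- For `x ∈ 𝕊²`, a tangential `p` and a unit tangent direction `ν`, the
function `φ(t) = −2 log‖x + tν − T(x,p)‖` is twice differentiable at `t = 0` with
`φ''(0) = ⟨ν,p⟩² − (‖p‖² + 1)/2` (the second directional derivative of the cost,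
appearing in `A(x,p) = D²ₓₓc(x, T(x,p))`). -/
theorem cost_second_directional_derivative
    (x p ν : EuclideanSpace ℝ (Fin 3)) (hx : ‖x‖ = 1) (hp : ⟪p, x⟫ = 0)
    (hν : ‖ν‖ = 1) (hνx : ⟪ν, x⟫ = 0)
    (y : EuclideanSpace ℝ (Fin 3))
    (hy : y = (‖p‖ ^ 2 + 1)⁻¹ • ((-2 : ℝ) • p + (‖p‖ ^ 2 - 1) • x))
    (φ : ℝ → ℝ) (hφ : φ = fun t : ℝ => -2 * Real.log ‖x + t • ν - y‖) :
    DifferentiableAt ℝ φ 0 ∧ DifferentiableAt ℝ (deriv φ) 0 ∧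
      deriv (deriv φ) 0 = ⟪ν, p⟫ ^ 2 - (‖p‖ ^ 2 + 1) / 2 := by
  have hφ' : φ = fun t : ℝ => -Real.log
      (t ^ 2 + 4 * ⟪ν, p⟫ / (‖p‖ ^ 2 + 1) * t + 4 / (‖p‖ ^ 2 + 1)) := by
    funext t
    rw [hφ, ← norm_sq_add_smul_sub x p ν hx hp hν hνx t, ← hy, Real.log_pow]
    push_cast
    ring
  obtain ⟨h1, h2⟩ := neg_log_quadratic_second_deriv (4 / (‖p‖ ^ 2 + 1))
    (4 * ⟪ν, p⟫ / (‖p‖ ^ 2 + 1)) (by positivity)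
  rw [← hφ'] at h1 h2
  refine ⟨h1, h2.differentiableAt, ?_⟩
  rw [h2.deriv]
  have hP : ‖p‖ ^ 2 + 1 ≠ 0 := by positivity
  field_simp
  ring
end

section
/- Let M be a real symmetric positive semidefinite n × n matrix. Then det(M) = min over all orthonormal bases (ν₁, …, νₙ) of ℝⁿ of the product ∏_{j=1}^n ⟨νⱼ, M νⱼ⟩, and the minimum is attained (at an orthonormal eigenbasis of M). Moreover, since ⟨νⱼ, M νⱼ⟩ ≥ 0 for every unit vector νⱼ, the same identity holds with each factor replaced by max{⟨νⱼ, M νⱼ⟩, 0}: det(M) = min over orthonormal bases of ∏_{j=1}^n max{⟨νⱼ, M νⱼ⟩, 0}. -/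
open Matrix

/-!
Write `M = U diag(λ) Uᵀ` with `U` orthogonal and `λ ≥ 0`. If the `νⱼ` are the rows of an
orthogonal matrix `V`, then `⟨νⱼ, M νⱼ⟩ = ∑ᵢ wⱼᵢ λᵢ`, where `wⱼᵢ = (V U)ⱼᵢ ^ 2` is a doubly
stochastic matrix. As each row of `w` sums to `1`, weighted AM-GM gives
`∏ᵢ λᵢ ^ wⱼᵢ ≤ ⟨νⱼ, M νⱼ⟩`; multiplying over `j`, and using that each column of `w` sums to `1`,
gives `det M = ∏ᵢ λᵢ ≤ ∏ⱼ ⟨νⱼ, M νⱼ⟩` (`prod_le_prod_sum_sq_mul`). The choice `V = Uᵀ` gives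
equality. Since all the factors are nonnegative, truncating them at `0` changes nothing.
-/

/-- The quadratic form of `M` at the rows of `V` is the diagonal of `V M Vᵀ`. -/
lemma dotProduct_mulVec_row {n : ℕ} (M V : Matrix (Fin n) (Fin n) ℝ) (j : Fin n) :
    V j ⬝ᵥ M.mulVec (V j) = (V * M * Vᵀ) j j := by
  rw [Matrix.dotProduct_mulVec]
  rfl

/-- Weighted AM-GM in each row of the doubly stochastic matrix `(Wⱼᵢ ^ 2)`, multiplied over the
rows. Zero entries of `l` are harmless, because the exponents are nonnegative. -/
lemma prod_le_prod_sum_sq_mul {n : ℕ} (W : Matrix (Fin n) (Fin n) ℝ) (hW : W * Wᵀ = 1)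
    (l : Fin n → ℝ) (hl : ∀ i, 0 ≤ l i) :
    ∏ i, l i ≤ ∏ j, ∑ i, W j i ^ 2 * l i := by
  have hrow (j : Fin n) : ∑ i, W j i ^ 2 = 1 := by
    simpa [Matrix.mul_apply, sq] using congrFun (congrFun hW j) j
  have hcol (i : Fin n) : ∑ j, W j i ^ 2 = 1 := by
    have hW' : Wᵀ * W = 1 := mul_eq_one_comm.mp hW
    simpa [Matrix.mul_apply, sq] using congrFun (congrFun hW' i) i
  calc ∏ i, l i = ∏ i, ∏ j, l i ^ (W j i ^ 2) := by
        refine Finset.prod_congr rfl fun i _ => ?_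
        rw [← Real.rpow_sum_of_nonneg (hl i) fun j _ => sq_nonneg (W j i), hcol, Real.rpow_one]
    _ = ∏ j, ∏ i, l i ^ (W j i ^ 2) := Finset.prod_comm
    _ ≤ ∏ j, ∑ i, W j i ^ 2 * l i :=
        Finset.prod_le_prod
          (fun j _ => Finset.prod_nonneg fun i _ => Real.rpow_nonneg (hl i) _)
          (fun j _ => Real.geom_mean_le_arith_mean_weighted _ _ _
            (fun i _ => sq_nonneg (W j i)) (hrow j) fun i _ => hl i)

/-- The orthogonal diagonalization of a positive semidefinite matrix, in terms of plain real
matrices. -/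
lemma exists_orthogonal_diagonalization {n : ℕ} {M : Matrix (Fin n) (Fin n) ℝ}
    (hM : M.PosSemidef) :
    ∃ (U : Matrix (Fin n) (Fin n) ℝ) (l : Fin n → ℝ), U * Uᵀ = 1 ∧ (∀ i, 0 ≤ l i) ∧
      M = U * diagonal l * Uᵀ := by
  refine ⟨hM.1.eigenvectorUnitary, hM.1.eigenvalues, ?_, hM.eigenvalues_nonneg, ?_⟩
  · simpa [star_eq_conjTranspose] using Unitary.mul_star_self_of_mem hM.1.eigenvectorUnitary.2
  · simpa [Unitary.conjStarAlgAut_apply, star_eq_conjTranspose, Function.comp_def]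
      using hM.1.spectral_theorem

/-- For a real symmetric positive semidefinite `n × n` matrix `M`,
`det M` is the minimum, over all orthonormal bases `(ν₁, …, νₙ)` of `ℝⁿ`, of
`∏ⱼ ⟨νⱼ, M νⱼ⟩`, and the minimum is attained; the same holds with each factor replaced by
`max{⟨νⱼ, M νⱼ⟩, 0}`. -/
theorem det_eq_min_orthonormal_products
    (n : ℕ) (M : Matrix (Fin n) (Fin n) ℝ) (hM : M.PosSemidef) :
    IsLeast {r : ℝ | ∃ ν : Fin n → (Fin n → ℝ),
        (∀ i k, ν i ⬝ᵥ ν k = if i = k then (1 : ℝ) else 0) ∧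
        r = ∏ j, ν j ⬝ᵥ M.mulVec (ν j)} M.det ∧
    IsLeast {r : ℝ | ∃ ν : Fin n → (Fin n → ℝ),
        (∀ i k, ν i ⬝ᵥ ν k = if i = k then (1 : ℝ) else 0) ∧
        r = ∏ j, max (ν j ⬝ᵥ M.mulVec (ν j)) 0} M.det := by
  have hmax (v : Fin n → ℝ) : max (v ⬝ᵥ M.mulVec v) 0 = v ⬝ᵥ M.mulVec v :=
    max_eq_left (by simpa using hM.dotProduct_mulVec_nonneg v)
  simp only [hmax, and_self]
  obtain ⟨U, l, hU, hl, rfl⟩ := exists_orthogonal_diagonalization hM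
  have hU' : Uᵀ * U = 1 := mul_eq_one_comm.mp hU
  have hdet : (U * diagonal l * Uᵀ).det = ∏ i, l i := by
    rw [Matrix.det_mul_comm, ← Matrix.mul_assoc, hU', Matrix.one_mul, det_diagonal]
  rw [hdet]
  constructor
  · refine ⟨Uᵀ, fun i k => ?_, Finset.prod_congr rfl fun j _ => ?_⟩
    · have h := congrFun (congrFun hU' i) k
      rwa [Matrix.one_apply] at h
    · have h : Uᵀ * (U * diagonal l * Uᵀ) * Uᵀᵀ = diagonal l := by
        rw [transpose_transpose, Matrix.mul_assoc, Matrix.mul_assoc, hU', Matrix.mul_one,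
          ← Matrix.mul_assoc, hU', Matrix.one_mul]
      rw [dotProduct_mulVec_row, h, diagonal_apply_eq]
  · rintro r ⟨ν, hν, rfl⟩
    let V : Matrix (Fin n) (Fin n) ℝ := ν
    have hV : V * Vᵀ = 1 := by
      ext i k
      rw [Matrix.one_apply]
      exact hν i k
    have hW : (V * U) * (V * U)ᵀ = 1 := by
      rw [transpose_mul, Matrix.mul_assoc, ← Matrix.mul_assoc U, hU, Matrix.one_mul, hV]
    refine (prod_le_prod_sum_sq_mul (V * U) hW l hl).trans_eq
      (Finset.prod_congr rfl fun j _ => ?_)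
    have h : V * (U * diagonal l * Uᵀ) * Vᵀ = V * U * diagonal l * (V * U)ᵀ := by
      simp only [transpose_mul, Matrix.mul_assoc]
    change _ = V j ⬝ᵥ (U * diagonal l * Uᵀ).mulVec (V j)
    rw [dotProduct_mulVec_row, h, Matrix.mul_apply]
    refine Finset.sum_congr rfl fun i _ => ?_
    rw [mul_diagonal, transpose_apply]
    ring
end
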